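/- Let Ω ⊂ ℝ^d (d ≥ 1) be a compact set and assume P ⊂ ℝ^d is a sampling set for B_Ω. Then there exists η > 0 such that every subset Λ ⊂ P satisfying P ⊂ Λ + B_η(0) (i.e., every point of P is within distance η of Λ) is also a sampling set for B_Ω. -/

import Mathlib

open MeasureTheory FourierTransform Filter Metric
open scoped Pointwise RealInnerProductSpace ENNReal NNReal

noncomputable section

variable {V : Type*} [NormedAddCommGroup V] [InnerProductSpace ℝ V]
  [FiniteDimensional ℝ V] [MeasurableSpace V] [BorelSpace V]

/-- `f` belongs to the Bernstein space `B_Ω`: it is a continuous bounded function which is the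
inverse Fourier transform of a tempered distribution supported in `Ω`, i.e. its distributional
Fourier transform annihilates every test function whose support is disjoint from `Ω`. -/
def MemBernstein (Ω : Set V) (f : V → ℂ) : Prop :=
  Continuous f ∧ (∃ C, ∀ x, ‖f x‖ ≤ C) ∧
    ∀ ψ : V → ℂ, ContDiff ℝ (⊤ : ℕ∞) ψ → HasCompactSupport ψ → tsupport ψ ∩ Ω = ∅ →
      ∫ x, f x * 𝓕 ψ x = 0

/-- `P` is a sampling set for the Bernstein space `B_Ω`:
`‖f‖_∞ ≤ C · sup_{x ∈ P} ‖f x‖` for all `f ∈ B_Ω`. -/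
def IsSamplingSet (Ω P : Set V) : Prop :=
  ∃ C > 0, ∀ f : V → ℂ, MemBernstein Ω f →
    ∀ x : V, ‖f x‖ ≤ C * sSup ((fun p => ‖f p‖) '' P)

/-- A set is uniformly discrete if distinct points are separated by a fixed positive distance. -/
def UniformlyDiscrete {X : Type*} [PseudoMetricSpace X] (Λ : Set X) : Prop :=
  ∃ δ > 0, ∀ x ∈ Λ, ∀ y ∈ Λ, x ≠ y → δ ≤ dist x y

/-- The lower uniform (Beurling) density of a set:
`D⁻(Λ) = lim_{r→∞} inf_x #(Λ ∩ B_r(x)) / |B_r(x)|`. -/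
def lowerUniformDensity {X : Type*} [NormedAddCommGroup X] [MeasureSpace X] (Λ : Set X) : ℝ :=
  liminf (fun r : ℝ => ⨅ x : X,
    (Nat.card ↥(Λ ∩ closedBall x r) : ℝ) / (volume (closedBall x r)).toReal) atTop

/-!
A bounded spectrum makes every `f ∈ B_Ω` reproduce itself against one fixed integrable kernel: if
`χ` is a smooth cutoff equal to `1` near `Ω`, then `f x = ∫ f z · 𝓕χ (z - x) dz`. Since translation
is continuous in `L¹`, this makes the unit ball of `B_Ω` uniformly equicontinuous. Passing from `P`
to a set `Λ` that is `η`-dense in `P` therefore costs at most `κ ‖f‖_∞`, with `κ` as small as we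
like, and for `κ = 1 / (2C)` this error is absorbed by the sampling inequality for `P`.
-/

open scoped Topology ContDiff SchwartzMap

open DomAddAct in
theorem tendsto_integral_norm_comp_add_left_sub {G E : Type*} [AddGroup G] [TopologicalSpace G]
    [IsTopologicalAddGroup G] [MeasurableSpace G] [BorelSpace G] {μ : Measure G}
    [IsLocallyFiniteMeasure μ] [μ.InnerRegularCompactLTTop] [μ.IsAddLeftInvariant]
    [NormedAddCommGroup E] {f : G → E} (hf : Integrable f μ) :
    Tendsto (fun h => ∫ z, ‖f (h + z) - f z‖ ∂μ) (𝓝 0) (𝓝 0) := by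
  have : Fact ((1 : ℝ≥0∞) ≠ ⊤) := ⟨ENNReal.one_ne_top⟩
  let F : Lp E 1 μ := hf.toL1 f
  let translate (h : G) : Lp E 1 μ := mk h +ᵥ F
  have hcont : Continuous fun h => ‖translate h - F‖ :=
    ((continuous_mk.vadd continuous_const).sub continuous_const).norm
  have hnorm (h : G) : ‖translate h - F‖ = ∫ z, ‖f (h + z) - f z‖ ∂μ := by
    have hsub : translate h - F =
        ((hf.comp_add_left h).sub hf).toL1 (fun z => f (h + z) - f z) :=
      (Integrable.toL1_sub _ _ (hf.comp_add_left h) hf).symm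
    rw [hsub, L1.norm_of_fun_eq_integral_norm]
  simpa [hnorm] using hcont.tendsto 0

theorem tendsto_integral_comp_smul_mul {E 𝕜 : Type*} [NormedAddCommGroup E] [NormedSpace ℝ E]
    [MeasurableSpace E] [OpensMeasurableSpace E] [RCLike 𝕜] {μ : Measure E} {f K : E → 𝕜} {M : ℝ}
    (hf : Continuous f) (hM : ∀ x, ‖f x‖ ≤ M) (hK : Integrable K μ) :
    Tendsto (fun ε : ℝ => ∫ z, f (ε • z) * K z ∂μ) (𝓝 0) (𝓝 (f 0 * ∫ z, K z ∂μ)) := by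
  rw [← integral_const_mul]
  refine tendsto_integral_filter_of_dominated_convergence (fun z => M * ‖K z‖)
    (.of_forall fun ε => ?_) (.of_forall fun ε => .of_forall fun z => ?_)
    (hK.norm.const_mul M) (.of_forall fun z => ?_)
  · exact (hf.comp (continuous_const_smul ε)).aestronglyMeasurable.mul hK.aestronglyMeasurable
  · rw [norm_mul]
    gcongr
    exact hM _
  · have hcont : Continuous fun ε : ℝ => f (ε • z) * K z := by fun_prop
    simpa using hcont.tendsto 0

section Fourier

variable {F : Type*} [NormedAddCommGroup F] [NormedSpace ℂ F]

theorem fourier_fourierChar_inner_smul (ψ : V → F) (x y : V) :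
    𝓕 (fun v => Real.fourierChar ⟪v, x⟫ • ψ v) y = 𝓕 ψ (y - x) := by
  simp only [Real.fourier_eq, smul_smul, ← AddChar.map_add_eq_mul, inner_sub_right, neg_sub,
    neg_add_eq_sub]

theorem fourier_comp_smul (ψ : V → F) {ε : ℝ} (hε : ε ≠ 0) (y : V) :
    𝓕 (fun v => ψ (ε • v)) y = |(ε ^ Module.finrank ℝ V)⁻¹| • 𝓕 ψ (ε⁻¹ • y) := by
  rw [Real.fourier_eq, Real.fourier_eq, ← Measure.integral_comp_smul]
  simp only [real_inner_smul_left, real_inner_smul_right, inv_mul_cancel_left₀ hε]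

theorem integral_mul_fourier_comp_smul (f ψ : V → ℂ) {ε : ℝ} (hε : ε ≠ 0) :
    ∫ y, f y * 𝓕 (fun v => ψ (ε • v)) y = ∫ z, f (ε • z) * 𝓕 ψ z := by
  have hsubst := Measure.integral_comp_smul volume (fun y => f y * 𝓕 ψ (ε⁻¹ • y)) ε
  simp only [inv_smul_smul₀ hε] at hsubst
  simp only [hsubst, fourier_comp_smul ψ hε, mul_smul_comm, integral_smul]

theorem contDiff_fourierChar_inner_smul {E : Type*} [NormedAddCommGroup E]
    [InnerProductSpace ℝ E] {ψ : E → F} {n : ℕ∞ω} (hψ : ContDiff ℝ n ψ) (x : E) :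
    ContDiff ℝ n fun v => Real.fourierChar ⟪v, x⟫ • ψ v := by
  have hphase : ContDiff ℝ n fun v : E => ((2 * Real.pi * ⟪v, x⟫ : ℝ) : ℂ) :=
    Complex.ofRealCLM.contDiff.comp
      (contDiff_const.mul (contDiff_id.inner ℝ contDiff_const))
  simp only [Circle.smul_def, Real.fourierChar_apply]
  fun_prop

theorem integrable_fourier_of_contDiff_of_hasCompactSupport {ψ : V → F} (hψ : ContDiff ℝ ∞ ψ)
    (hψc : HasCompactSupport ψ) : Integrable (𝓕 ψ) :=
  (𝓕 (hψc.toSchwartzMap hψ)).integrable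

end Fourier

theorem exists_contDiff_hasCompactSupport_eqOn_one_ball {E : Type*} [NormedAddCommGroup E]
    [NormedSpace ℝ E] [FiniteDimensional ℝ E] (c : E) {R : ℝ} (hR : 0 < R) :
    ∃ χ : E → ℂ, ContDiff ℝ ∞ χ ∧ HasCompactSupport χ ∧ Set.EqOn χ 1 (ball c R) := by
  let b : ContDiffBump c := ⟨R, R + 1, hR, lt_add_one R⟩
  refine ⟨fun v => (b v : ℂ), Complex.ofRealCLM.contDiff.comp b.contDiff,
    b.hasCompactSupport.comp_left (g := Complex.ofReal) Complex.ofReal_zero, fun v hv => ?_⟩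
  have hbv : b v = 1 := b.one_of_mem_closedBall (ball_subset_closedBall hv)
  simp [hbv]

namespace MemBernstein

variable {Ω : Set V} {f : V → ℂ}

theorem bddAbove_range_norm (hf : MemBernstein Ω f) : BddAbove (Set.range fun x => ‖f x‖) :=
  let ⟨M, hM⟩ := hf.2.1
  ⟨M, Set.forall_mem_range.2 hM⟩

theorem integrable_mul (hf : MemBernstein Ω f) {K : V → ℂ} (hK : Integrable K) :
    Integrable fun z => f z * K z :=
  let ⟨_, hM⟩ := hf.2.1
  hK.bdd_mul hf.1.aestronglyMeasurable (.of_forall hM)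

theorem comp_add_left (hf : MemBernstein Ω f) (x : V) : MemBernstein Ω fun y => f (x + y) := by
  obtain ⟨hcont, ⟨M, hM⟩, hspec⟩ := hf
  refine ⟨by fun_prop, ⟨M, fun y => hM _⟩, fun ψ hψ hψc hψΩ => ?_⟩
  have hmod := hspec _ (contDiff_fourierChar_inner_smul hψ x) hψc.smul_left
    (Set.subset_eq_empty (Set.inter_subset_inter_left Ω (tsupport_smul_subset_right _ ψ)) hψΩ)
  rw [← hmod, ← integral_add_left_eq_self (fun y => f y * _) x]
  simp only [fourier_fourierChar_inner_smul, add_sub_cancel_left]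

theorem integral_mul_fourier_congr (hf : MemBernstein Ω f) {χ₁ χ₂ : V → ℂ}
    (hχ₁ : ContDiff ℝ ∞ χ₁) (hχ₁c : HasCompactSupport χ₁)
    (hχ₂ : ContDiff ℝ ∞ χ₂) (hχ₂c : HasCompactSupport χ₂)
    {U : Set V} (hU : IsOpen U) (hΩU : Ω ⊆ U) (heq : Set.EqOn χ₁ χ₂ U) :
    ∫ y, f y * 𝓕 χ₁ y = ∫ y, f y * 𝓕 χ₂ y := by
  have hsupp : tsupport (χ₁ - χ₂) ⊆ Uᶜ :=
    closure_minimal (fun v hv hvU => hv (sub_eq_zero.2 (heq hvU))) hU.isClosed_compl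
  have hdisj : tsupport (χ₁ - χ₂) ∩ Ω = ∅ :=
    Set.eq_empty_of_forall_notMem fun v hv => hsupp hv.1 (hΩU hv.2)
  have hsub (y : V) : 𝓕 (χ₁ - χ₂) y = 𝓕 χ₁ y - 𝓕 χ₂ y :=
    DFunLike.congr_fun ((FourierTransform.fourierₗ ℂ 𝓢(V, ℂ)).map_sub
      (hχ₁c.toSchwartzMap hχ₁) (hχ₂c.toSchwartzMap hχ₂)) y
  have hzero := hf.2.2 (χ₁ - χ₂) (hχ₁.sub hχ₂) (hχ₁c.sub hχ₂c) hdisj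
  simp only [hsub, mul_sub] at hzero
  rwa [integral_sub
    (hf.integrable_mul (integrable_fourier_of_contDiff_of_hasCompactSupport hχ₁ hχ₁c))
    (hf.integrable_mul (integrable_fourier_of_contDiff_of_hasCompactSupport hχ₂ hχ₂c)),
    sub_eq_zero] at hzero

section Reproducing

variable {χ : V → ℂ} {R : ℝ}

-- The integrals against `𝓕 (χ (ε • ·))`, `0 < ε ≤ 1`, all agree because these cutoffs are `1` on a
-- neighbourhood of `Ω`; as `ε → 0` they concentrate at the origin.
theorem apply_zero_eq_integral (hf : MemBernstein Ω f) (hχ : ContDiff ℝ ∞ χ)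
    (hχc : HasCompactSupport χ) (hR : 0 < R) (hΩ : Ω ⊆ ball 0 R) (hχ1 : Set.EqOn χ 1 (ball 0 R)) :
    f 0 = ∫ z, f z * 𝓕 χ z := by
  obtain ⟨M, hM⟩ := hf.2.1
  have hint : Integrable (𝓕 χ) := integrable_fourier_of_contDiff_of_hasCompactSupport hχ hχc
  have hmass : ∫ z, 𝓕 χ z = 1 := by
    have hinv := congrFun (hχ.continuous.fourierInv_fourier_eq
      (hχ.continuous.integrable_of_hasCompactSupport hχc) hint) 0
    rw [hχ1 (mem_ball_self hR), Real.fourierInv_eq] at hinv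
    simpa using hinv
  have hlim : Tendsto (fun ε : ℝ => ∫ z, f (ε • z) * 𝓕 χ z) (𝓝[>] 0) (𝓝 (f 0)) := by
    simpa [hmass] using (tendsto_integral_comp_smul_mul hf.1 hM hint).mono_left nhdsWithin_le_nhds
  have hconst : ∀ ε ∈ Set.Ioc (0 : ℝ) 1, ∫ z, f (ε • z) * 𝓕 χ z = ∫ z, f z * 𝓕 χ z := by
    intro ε ⟨hε, hε1⟩
    rw [← integral_mul_fourier_comp_smul f χ hε.ne']
    refine hf.integral_mul_fourier_congr (by fun_prop) (hχc.comp_smul hε.ne') hχ hχc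
      isOpen_ball hΩ fun v hv => ?_
    have hεv : ε • v ∈ ball (0 : V) R :=
      ((convex_ball 0 R).starConvex (mem_ball_self hR)).smul_mem hv hε.le hε1
    exact (hχ1 hεv).trans (hχ1 hv).symm
  refine tendsto_nhds_unique hlim (tendsto_const_nhds.congr' ?_)
  filter_upwards [Ioc_mem_nhdsGT one_pos] with ε hε using (hconst ε hε).symm

theorem apply_eq_integral (hf : MemBernstein Ω f) (hχ : ContDiff ℝ ∞ χ)
    (hχc : HasCompactSupport χ) (hR : 0 < R) (hΩ : Ω ⊆ ball 0 R) (hχ1 : Set.EqOn χ 1 (ball 0 R))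
    (x : V) : f x = ∫ z, f z * 𝓕 χ (z - x) := by
  rw [← integral_add_left_eq_self _ x]
  simpa using (hf.comp_add_left x).apply_zero_eq_integral hχ hχc hR hΩ hχ1

theorem norm_sub_le_integral (hf : MemBernstein Ω f) (hχ : ContDiff ℝ ∞ χ)
    (hχc : HasCompactSupport χ) (hR : 0 < R) (hΩ : Ω ⊆ ball 0 R) (hχ1 : Set.EqOn χ 1 (ball 0 R))
    (x y : V) : ‖f x - f y‖ ≤ (⨆ z, ‖f z‖) * ∫ z, ‖𝓕 χ (y - x + z) - 𝓕 χ z‖ := by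
  have hint (a : V) : Integrable fun z => 𝓕 χ (z - a) :=
    (integrable_fourier_of_contDiff_of_hasCompactSupport hχ hχc).comp_sub_right a
  calc ‖f x - f y‖ = ‖∫ z, f z * (𝓕 χ (z - x) - 𝓕 χ (z - y))‖ := by
        rw [hf.apply_eq_integral hχ hχc hR hΩ hχ1 x, hf.apply_eq_integral hχ hχc hR hΩ hχ1 y,
          ← integral_sub (hf.integrable_mul (hint x)) (hf.integrable_mul (hint y))]
        simp only [mul_sub]
    _ ≤ ∫ z, (⨆ w, ‖f w‖) * ‖𝓕 χ (z - x) - 𝓕 χ (z - y)‖ := by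
        refine norm_integral_le_of_norm_le (((hint x).sub (hint y)).norm.const_mul _)
          (.of_forall fun z => ?_)
        rw [norm_mul]
        gcongr
        exact le_ciSup hf.bddAbove_range_norm z
    _ = (⨆ w, ‖f w‖) * ∫ z, ‖𝓕 χ (y - x + z) - 𝓕 χ z‖ := by
        rw [integral_const_mul, ← integral_add_left_eq_self _ y]
        simp only [add_sub_cancel_left, add_sub_right_comm]

end Reproducing

theorem exists_norm_sub_le_mul_iSup_norm (hΩ : Bornology.IsBounded Ω) {κ : ℝ} (hκ : 0 < κ) :
    ∃ η > 0, ∀ f : V → ℂ, MemBernstein Ω f →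
      ∀ x y, dist x y ≤ η → ‖f x - f y‖ ≤ κ * ⨆ z, ‖f z‖ := by
  obtain ⟨R, hR, hΩR⟩ := hΩ.subset_ball_lt 0 0
  obtain ⟨χ, hχ, hχc, hχ1⟩ := exists_contDiff_hasCompactSupport_eqOn_one_ball (0 : V) hR
  have hlim := tendsto_integral_norm_comp_add_left_sub
    (integrable_fourier_of_contDiff_of_hasCompactSupport hχ hχc)
  obtain ⟨η, hη, hsmall⟩ := nhds_basis_closedBall.eventually_iff.1 (hlim.eventually_le_const hκ)
  refine ⟨η, hη, fun f hf x y hxy => ?_⟩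
  have hyx : y - x ∈ closedBall (0 : V) η := by rwa [mem_closedBall_zero_iff, ← dist_eq_norm']
  calc ‖f x - f y‖ ≤ (⨆ z, ‖f z‖) * ∫ z, ‖𝓕 χ (y - x + z) - 𝓕 χ z‖ :=
        hf.norm_sub_le_integral hχ hχc hR hΩR hχ1 x y
    _ ≤ (⨆ z, ‖f z‖) * κ := by
        gcongr
        · exact Real.iSup_nonneg fun z => norm_nonneg _
        · exact hsmall hyx
    _ = κ * ⨆ z, ‖f z‖ := mul_comm _ _

end MemBernstein

theorem sSup_norm_image_le_add_of_subset_add_closedBall {X E : Type*} [SeminormedAddCommGroup X]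
    [SeminormedAddCommGroup E] {f : X → E} {P Λ : Set X} {η κ : ℝ}
    (hbdd : BddAbove ((fun p => ‖f p‖) '' Λ)) (hκ : 0 ≤ κ) (hPΛ : P ⊆ Λ + closedBall 0 η)
    (hf : ∀ x y, dist x y ≤ η → ‖f x - f y‖ ≤ κ) :
    sSup ((fun p => ‖f p‖) '' P) ≤ sSup ((fun p => ‖f p‖) '' Λ) + κ := by
  have hnonneg : 0 ≤ sSup ((fun p => ‖f p‖) '' Λ) :=
    Real.sSup_nonneg (Set.forall_mem_image.2 fun _ _ => norm_nonneg _)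
  refine Real.sSup_le (Set.forall_mem_image.2 fun p hp => ?_) (by positivity)
  obtain ⟨q, hq, e, he, rfl⟩ := Set.mem_add.1 (hPΛ hp)
  calc ‖f (q + e)‖ ≤ ‖f q‖ + ‖f (q + e) - f q‖ := norm_le_norm_add_norm_sub' _ _
    _ ≤ sSup ((fun p => ‖f p‖) '' Λ) + κ :=
        add_le_add (le_csSup hbdd (Set.mem_image_of_mem _ hq))
          (hf _ _ (by simpa [dist_eq_norm] using he))

theorem sampling_set_stable_under_perturbation_general {Ω P : Set V}
    (hΩ : Bornology.IsBounded Ω) (hP : IsSamplingSet Ω P) :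
    ∃ η > 0, ∀ Λ : Set V, P ⊆ Λ + closedBall (0 : V) η → IsSamplingSet Ω Λ := by
  obtain ⟨C, hC, hPC⟩ := hP
  obtain ⟨η, hη, hequi⟩ := MemBernstein.exists_norm_sub_le_mul_iSup_norm hΩ
    (κ := (2 * C)⁻¹) (by positivity)
  refine ⟨η, hη, fun Λ hPΛ => ⟨2 * C, by positivity, fun f hf x => ?_⟩⟩
  set M := ⨆ z, ‖f z‖
  set S := sSup ((fun p => ‖f p‖) '' Λ)
  have hM : 0 ≤ M := Real.iSup_nonneg fun z => norm_nonneg _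
  have hPS : sSup ((fun p => ‖f p‖) '' P) ≤ S + (2 * C)⁻¹ * M :=
    sSup_norm_image_le_add_of_subset_add_closedBall
      (hf.bddAbove_range_norm.mono (Set.image_subset_range _ _)) (by positivity) hPΛ (hequi f hf)
  have hhalf : M ≤ C * S + M / 2 := ciSup_le fun y =>
    calc ‖f y‖ ≤ C * sSup ((fun p => ‖f p‖) '' P) := hPC f hf y
      _ ≤ C * (S + (2 * C)⁻¹ * M) := by gcongr
      _ = C * S + M / 2 := by field_simp
  calc ‖f x‖ ≤ M := le_ciSup hf.bddAbove_range_norm x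
    _ ≤ 2 * C * S := by linarith

/-- Proposition 1: if `P` is a sampling set for `B_Ω`, then there is `η > 0` such that every
`Λ ⊆ P` with `P ⊆ Λ + B_η(0)` is also a sampling set for `B_Ω`. -/
theorem sampling_set_stable_under_perturbation
    (d : ℕ) (hd : 1 ≤ d)
    (Ω : Set (EuclideanSpace ℝ (Fin d))) (hΩcompact : IsCompact Ω)
    (P : Set (EuclideanSpace ℝ (Fin d))) (hP : IsSamplingSet Ω P) :
    ∃ η > 0, ∀ Λ : Set (EuclideanSpace ℝ (Fin d)), Λ ⊆ P →
      P ⊆ Λ + closedBall (0 : EuclideanSpace ℝ (Fin d)) η → IsSamplingSet Ω Λ := by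
  obtain ⟨η, hη, hstable⟩ :=
    sampling_set_stable_under_perturbation_general hΩcompact.isBounded hP
  exact ⟨η, hη, fun Λ _ => hstable Λ⟩
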